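/- Let h ∈ K̄[z] be nonzero of degree d ≥ 1 all of whose roots in K̄ have valuation ≤ 0, let S be the multiset of roots of h, and define φ(b) := 𝔱^S(0, b) for rational b ≥ 0. Let d° be the largest odd integer with d° ≤ d. Then: (i) 0 ≤ φ(b) ≤ 2v(2) for all b ≥ 0, and φ is nondecreasing; (ii) for all rationals 0 ≤ b ≤ b′ one has min{φ(b) + (b′ − b), 2v(2)} ≤ φ(b′) ≤ min{φ(b) + d°·(b′ − b), 2v(2)} (so φ is strictly increasing, with slopes between 1 and d°, until it reaches the value 2v(2), after which it is constantly equal to 2v(2)); (iii) φ(b) = 2v(2) for all sufficiently large rational b; (iv) consequently, every b ≥ 0 with φ(b) = 2v(2) satisfies b ≥ (2v(2) − φ(0))/d°, and the least such b is at most 2v(2). -/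

import Mathlib

open Polynomial

/-- The *Gauss valuation* of a polynomial: the minimum of the valuations of its
coefficients (with value `⊤ = +∞` for the zero polynomial). -/
noncomputable def gaussVal {Kbar : Type*} [Field Kbar]
    (v : AddValuation Kbar (WithTop ℚ)) (h : Kbar[X]) : WithTop ℚ :=
  h.support.inf fun i => v (h.coeff i)

/-- `h = q² + ρ` is a *part-square decomposition* of `h`:
`deg q ≤ ⌈deg h / 2⌉`, encoded as `2 * deg q ≤ deg h + 1` (`q = 0` is allowed). -/
def IsPSD {Kbar : Type*} [Field Kbar] (h q ρ : Kbar[X]) : Prop :=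
  h = q ^ 2 + ρ ∧ 2 * q.natDegree ≤ h.natDegree + 1

/-- A part-square decomposition `h = q² + ρ` is *good* if either `v ρ − v h ≥ 2 v 2`,
or `v ρ − v h < 2 v 2` and no part-square decomposition of `h` has strictly larger
Gauss valuation of its remainder. -/
def IsGoodPSD {Kbar : Type*} [Field Kbar] (v : AddValuation Kbar (WithTop ℚ))
    (h q ρ : Kbar[X]) : Prop :=
  IsPSD h q ρ ∧
    (gaussVal v h + (v 2 + v 2) ≤ gaussVal v ρ ∨
      (gaussVal v ρ < gaussVal v h + (v 2 + v 2) ∧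
        ∀ q' ρ' : Kbar[X], IsPSD h q' ρ' → gaussVal v ρ' ≤ gaussVal v ρ))

/-- The residue field of `v` is algebraically closed, encoded via integral lifts:
every monic polynomial of positive degree with integral coefficients has an integral
root modulo the maximal ideal. -/
def ResidueAlgClosed {Kbar : Type*} [Field Kbar]
    (v : AddValuation Kbar (WithTop ℚ)) : Prop :=
  ∀ p : Kbar[X], p.Monic → 0 < p.natDegree → (∀ i, 0 ≤ v (p.coeff i)) →
    ∃ x : Kbar, 0 ≤ v x ∧ 0 < v (p.eval x)

/-- The monic polynomial `h_S := ∏_{a ∈ S} (z − a)` attached to a finite multiset `S`. -/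
noncomputable def rootsPoly {Kbar : Type*} [Field Kbar] (S : Multiset Kbar) : Kbar[X] :=
  (S.map fun a => X - C a).prod

/-- `TVal v S α b t` expresses that `𝔱^S(α, b) = t`, i.e. (for some, equivalently any,
`β ∈ K̄ˣ` with `v β = b`) that
`t = min (2v(2), sup { v ρ − v (h_S(βz+α)) : h_S(βz+α) = q² + ρ part-square dec. })`;
the subtraction is avoided by adding `v (h_S(βz+α))` throughout and the truncated
supremum is expressed via `IsLUB`. -/
def TVal {Kbar : Type*} [Field Kbar] (v : AddValuation Kbar (WithTop ℚ))
    (S : Multiset Kbar) (α : Kbar) (b t : ℚ) : Prop :=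
  ∃ β : Kbar, β ≠ 0 ∧ v β = (b : WithTop ℚ) ∧
    IsLUB {u : WithTop ℚ |
        ∃ q ρ : Kbar[X], IsPSD ((rootsPoly S).comp (C β * X + C α)) q ρ ∧
          u = min (gaussVal v ((rootsPoly S).comp (C β * X + C α)) + (v 2 + v 2))
                (gaussVal v ρ)}
      (gaussVal v ((rootsPoly S).comp (C β * X + C α)) + (t : WithTop ℚ))

/-
A decomposition `h = q² + ρ` in which `ρ` has only odd powers attains the supremum in `𝔱^S`. It
exists because the even part of `h` is `g(z²)` with `g = a² + X b²`, so that `q = a(z²) + z b(z²)`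
works. It is optimal because the Gauss valuation of a square is attained at an even coefficient: if
`n` is the first index at which `e` attains its Gauss valuation, the coefficient of `e²` of index
`2n` has valuation exactly `2 v(e)`.

The condition on `ρ` survives `z ↦ βz`, so one decomposition computes `φ(b)` for all `b`. As `v(h)`
is the valuation of the constant term whenever `b ≥ 0`, `φ(b) = min (2 v(2)) (minᵢ (v(ρᵢ) + i b) -
v(h))`: a truncated minimum of affine functions whose slopes `i` are odd, at least `1` and at
most `d°`.
-/

section GaussValuation

variable {K : Type*} [Field K] {v : AddValuation K (WithTop ℚ)} {p q : K[X]}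

theorem le_gaussVal_iff {m : WithTop ℚ} : m ≤ gaussVal v p ↔ ∀ i, m ≤ v (p.coeff i) := by
  rw [gaussVal, Finset.le_inf_iff]
  refine ⟨fun hm i => ?_, fun hm i _ => hm i⟩
  by_cases hi : p.coeff i = 0
  · simp [hi]
  · exact hm i (mem_support_iff.mpr hi)

theorem gaussVal_le_coeff (i : ℕ) : gaussVal v p ≤ v (p.coeff i) :=
  le_gaussVal_iff.mp le_rfl i

theorem exists_gaussVal_eq_coeff (hp : p ≠ 0) : ∃ i, gaussVal v p = v (p.coeff i) := by
  obtain ⟨i, -, hi⟩ := Finset.exists_mem_eq_inf p.support (support_nonempty.mpr hp)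
    fun i => v (p.coeff i)
  exact ⟨i, hi⟩

theorem gaussVal_ne_top (hp : p ≠ 0) : gaussVal v p ≠ ⊤ :=
  ((gaussVal_le_coeff p.natDegree).trans_lt
    ((v.ne_top_iff.mpr (leadingCoeff_ne_zero.mpr hp)).lt_top)).ne

theorem gaussVal_C (a : K) : gaussVal v (C a) = v a := by
  refine le_antisymm ((gaussVal_le_coeff 0).trans_eq (by rw [coeff_C_zero])) ?_
  refine le_gaussVal_iff.mpr fun i => ?_
  rw [coeff_C]
  split_ifs <;> simp

theorem le_gaussVal_add {m : WithTop ℚ} (hp : m ≤ gaussVal v p) (hq : m ≤ gaussVal v q) :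
    m ≤ gaussVal v (p + q) :=
  le_gaussVal_iff.mpr fun i => coeff_add p q i ▸
    v.map_le_add (le_gaussVal_iff.mp hp i) (le_gaussVal_iff.mp hq i)

theorem gaussVal_add_le_gaussVal_mul : gaussVal v p + gaussVal v q ≤ gaussVal v (p * q) := by
  refine le_gaussVal_iff.mpr fun i => ?_
  rw [coeff_mul]
  refine v.map_le_sum fun x _ => ?_
  rw [v.map_mul]
  exact add_le_add (gaussVal_le_coeff _) (gaussVal_le_coeff _)

theorem exists_first_gaussVal_eq_coeff (hp : p ≠ 0) :
    ∃ n, gaussVal v p = v (p.coeff n) ∧ ∀ j < n, gaussVal v p < v (p.coeff j) := by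
  classical
  have hex := exists_gaussVal_eq_coeff (v := v) hp
  exact ⟨Nat.find hex, Nat.find_spec hex, fun j hj =>
    (gaussVal_le_coeff j).lt_of_ne (Nat.find_min hex hj)⟩

theorem map_coeff_mul_add_eq_of_first {n m : ℕ} (hp : p ≠ 0) (hq : q ≠ 0)
    (hn : gaussVal v p = v (p.coeff n)) (hn' : ∀ j < n, gaussVal v p < v (p.coeff j))
    (hm : gaussVal v q = v (q.coeff m)) (hm' : ∀ j < m, gaussVal v q < v (q.coeff j)) :
    v ((p * q).coeff (n + m)) = gaussVal v p + gaussVal v q := by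
  have hdiag : v (p.coeff n * q.coeff m) = gaussVal v p + gaussVal v q := by
    rw [v.map_mul, hn, hm]
  have hmem : (n, m) ∈ Finset.HasAntidiagonal.antidiagonal (n + m) :=
    Finset.HasAntidiagonal.mem_antidiagonal.mpr rfl
  rw [coeff_mul, ← Finset.add_sum_erase _ _ hmem, ← hdiag]
  refine v.map_add_eq_of_lt_left
    (v.map_lt_sum (hdiag ▸ WithTop.add_ne_top.mpr ⟨gaussVal_ne_top hp, gaussVal_ne_top hq⟩) ?_)
  rintro ⟨j, k⟩ hjk
  obtain ⟨hne, hsum⟩ := Finset.mem_erase.mp hjk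
  rw [Finset.HasAntidiagonal.mem_antidiagonal] at hsum
  rw [hdiag, v.map_mul]
  obtain hj | hk : j < n ∨ k < m := by grind
  · exact WithTop.add_lt_add_of_lt_of_le (gaussVal_ne_top hq) (hn' j hj) (gaussVal_le_coeff k)
  · exact WithTop.add_lt_add_of_le_of_lt (gaussVal_ne_top hp) (gaussVal_le_coeff j) (hm' k hk)

theorem exists_map_coeff_sq_eq_gaussVal_add :
    ∃ n, v ((p ^ 2).coeff (n + n)) = gaussVal v p + gaussVal v p := by
  obtain rfl | hp := eq_or_ne p 0
  · exact ⟨0, by simp [gaussVal]⟩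
  · obtain ⟨n, hn, hn'⟩ := exists_first_gaussVal_eq_coeff (v := v) hp
    exact ⟨n, by rw [pow_two, map_coeff_mul_add_eq_of_first hp hp hn hn' hn hn']⟩

end GaussValuation

section TotallyOdd

/-- A *totally odd* polynomial: only odd powers of the variable occur. The decompositions
`h = q² + ρ` with `ρ` totally odd are the ones computing `𝔱^S`. -/
def IsTotallyOdd {R : Type*} [Semiring R] (p : R[X]) : Prop :=
  ∀ i, Even i → p.coeff i = 0

variable {K : Type*} [Field K] {v : AddValuation K (WithTop ℚ)} {h q ρ : K[X]}

-- These polynomials are closed under products since `a² + X b²` is the norm of `a + b √(-X)`.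
theorem exists_eq_sq_add_X_mul_sq [IsAlgClosed K] (g : K[X]) :
    ∃ a b : K[X], g = a ^ 2 + X * b ^ 2 := by
  have hg : Splits g := IsAlgClosed.splits g
  induction hg using Submonoid.closure_induction with
  | mem f hf =>
    obtain ⟨r, rfl⟩ | ⟨r, rfl⟩ := hf <;> obtain ⟨s, rfl⟩ := IsAlgClosed.exists_pow_nat_eq r two_pos
    · exact ⟨C s, 0, by simp⟩
    · exact ⟨C s, 1, by rw [C_pow]; ring⟩
  | one => exact ⟨1, 0, by ring⟩
  | mul f f' _ _ hf hf' =>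
    obtain ⟨⟨a, b, rfl⟩, ⟨a', b', rfl⟩⟩ := hf, hf'
    exact ⟨a * a' - X * (b * b'), a * b' + b * a', by ring⟩

theorem exists_eq_sq_add_isTotallyOdd [IsAlgClosed K] (h : K[X]) :
    ∃ q ρ : K[X], h = q ^ 2 + ρ ∧ IsTotallyOdd ρ := by
  obtain ⟨a, b, hab⟩ := exists_eq_sq_add_X_mul_sq (contract 2 h)
  have hsq : (expand K 2 a + X * expand K 2 b) ^ 2
      = expand K 2 (contract 2 h) + X * expand K 2 (2 * a * b) := by
    simp only [hab, map_add, map_mul, map_pow, expand_X, map_ofNat]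
    ring
  refine ⟨expand K 2 a + X * expand K 2 b, h - (expand K 2 a + X * expand K 2 b) ^ 2, by ring, ?_⟩
  rintro _ ⟨i, rfl⟩
  have heven : (expand K 2 (contract 2 h)).coeff (i + i) = h.coeff (i + i) := by
    rw [← mul_two, coeff_expand_mul two_pos, coeff_contract two_ne_zero]
  have hodd : (X * expand K 2 (2 * a * b)).coeff (i + i) = 0 := by
    cases i with
    | zero => simp
    | succ i =>
      rw [← add_assoc, coeff_X_mul, coeff_expand two_pos, if_neg (by omega)]
  rw [hsq, coeff_sub, coeff_add, heven, hodd, add_zero, sub_self]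

theorem IsTotallyOdd.one_le_of_mem_support (hρ : IsTotallyOdd ρ) {i : ℕ} (hi : i ∈ ρ.support) :
    1 ≤ i :=
  Nat.one_le_iff_ne_zero.mpr fun h0 => mem_support_iff.mp hi (hρ i (h0 ▸ Even.zero))

theorem IsTotallyOdd.odd_natDegree (hρ : IsTotallyOdd ρ) (hρ0 : ρ ≠ 0) : Odd ρ.natDegree :=
  Nat.not_even_iff_odd.mp fun heven => leadingCoeff_ne_zero.mpr hρ0 (hρ _ heven)

theorem IsTotallyOdd.comp_C_mul_X (hρ : IsTotallyOdd ρ) (β : K) :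
    IsTotallyOdd (ρ.comp (C β * X)) := fun i hi => by
  rw [comp_C_mul_X_coeff, hρ i hi, zero_mul]

theorem IsTotallyOdd.coeff_sq_eq (hρ : IsTotallyOdd ρ) (hh : h = q ^ 2 + ρ) (n : ℕ) :
    (q ^ 2).coeff (n + n) = h.coeff (n + n) := by
  rw [hh, coeff_add, hρ _ ⟨n, rfl⟩, add_zero]

theorem IsTotallyOdd.two_mul_natDegree_le (hρ : IsTotallyOdd ρ) (hh : h = q ^ 2 + ρ) :
    2 * q.natDegree ≤ h.natDegree := by
  obtain rfl | hq := eq_or_ne q 0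
  · simp
  refine le_natDegree_of_ne_zero ?_
  rw [two_mul, ← hρ.coeff_sq_eq hh, ← two_mul, coeff_pow_mul_natDegree]
  exact pow_ne_zero 2 (leadingCoeff_ne_zero.mpr hq)

theorem IsTotallyOdd.natDegree_le (hρ : IsTotallyOdd ρ) (hh : h = q ^ 2 + ρ) :
    ρ.natDegree ≤ h.natDegree := by
  have hq : (q ^ 2).natDegree ≤ h.natDegree :=
    (natDegree_pow_le).trans (hρ.two_mul_natDegree_le hh)
  rw [eq_sub_of_add_eq' hh.symm]
  exact (natDegree_sub_le_of_le le_rfl hq).trans_eq (max_self _)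

theorem IsTotallyOdd.gaussVal_le_add_self (hρ : IsTotallyOdd ρ) (hh : h = q ^ 2 + ρ) :
    gaussVal v h ≤ gaussVal v q + gaussVal v q := by
  obtain ⟨n, hn⟩ := exists_map_coeff_sq_eq_gaussVal_add (v := v) (p := q)
  rw [← hn, hρ.coeff_sq_eq hh]
  exact gaussVal_le_coeff _

theorem IsTotallyOdd.gaussVal_le (hρ : IsTotallyOdd ρ) (hh : h = q ^ 2 + ρ) :
    gaussVal v h ≤ gaussVal v ρ := by
  have hq : gaussVal v h ≤ gaussVal v (q ^ 2) :=
    pow_two q ▸ (hρ.gaussVal_le_add_self hh).trans gaussVal_add_le_gaussVal_mul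
  refine le_gaussVal_iff.mpr fun i => ?_
  rw [eq_sub_of_add_eq' hh.symm, coeff_sub]
  exact v.map_le_sub (gaussVal_le_coeff i) (le_gaussVal_iff.mp hq i)

theorem map_two_add_gaussVal_le_gaussVal_two_mul {q e : K[X]} :
    v 2 + gaussVal v q + gaussVal v e ≤ gaussVal v (2 * q * e) :=
  calc v 2 + gaussVal v q + gaussVal v e = gaussVal v (2 : K[X]) + gaussVal v q + gaussVal v e := by
        rw [← map_ofNat C 2, gaussVal_C]
    _ ≤ gaussVal v (2 * q) + gaussVal v e := by gcongr; exact gaussVal_add_le_gaussVal_mul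
    _ ≤ gaussVal v (2 * q * e) := gaussVal_add_le_gaussVal_mul

-- The cross term `2qe` is too small to cancel the even coefficient of `e²` of valuation `2 v(e)`,
-- so that this coefficient survives in `ρ'`.
theorem IsTotallyOdd.gaussVal_le_add_self_of_lt (hρ : IsTotallyOdd ρ) {ρ' e : K[X]}
    (hρρ' : ρ = ρ' + (e ^ 2 + 2 * q * e)) (he : gaussVal v e < v 2 + gaussVal v q) :
    gaussVal v ρ' ≤ gaussVal v e + gaussVal v e := by
  have hlt : gaussVal v e + gaussVal v e < v 2 + gaussVal v q + gaussVal v e :=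
    WithTop.add_lt_add_right he.ne_top he
  obtain ⟨n, hn⟩ := exists_map_coeff_sq_eq_gaussVal_add (v := v) (p := e)
  have hcoeff : ρ'.coeff (n + n) = -((e ^ 2).coeff (n + n) + (2 * q * e).coeff (n + n)) := by
    have hzero := hρ _ ⟨n, rfl⟩
    rw [hρρ', coeff_add, coeff_add] at hzero
    linear_combination hzero
  calc gaussVal v ρ' ≤ v (ρ'.coeff (n + n)) := gaussVal_le_coeff _
    _ = v ((e ^ 2).coeff (n + n) + (2 * q * e).coeff (n + n)) := by rw [hcoeff, v.map_neg]
    _ = v ((e ^ 2).coeff (n + n)) := v.map_add_eq_of_lt_left <| hn ▸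
      hlt.trans_le (map_two_add_gaussVal_le_gaussVal_two_mul.trans (gaussVal_le_coeff _))
    _ = gaussVal v e + gaussVal v e := hn

theorem IsTotallyOdd.min_gaussVal_le (hρ : IsTotallyOdd ρ) (hh : h = q ^ 2 + ρ) {q' ρ' : K[X]}
    (hh' : h = q' ^ 2 + ρ') :
    min (gaussVal v h + (v 2 + v 2)) (gaussVal v ρ') ≤ gaussVal v ρ := by
  obtain ⟨e, rfl⟩ : ∃ e, q' = q + e := ⟨q' - q, by ring⟩
  have hρρ' : ρ = ρ' + (e ^ 2 + 2 * q * e) := by linear_combination hh' - hh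
  suffices hle : min (gaussVal v h + (v 2 + v 2)) (gaussVal v ρ') ≤ gaussVal v e + gaussVal v e ∧
      min (gaussVal v h + (v 2 + v 2)) (gaussVal v ρ') ≤ v 2 + gaussVal v q + gaussVal v e by
    rw [hρρ']
    refine le_gaussVal_add (min_le_right _ _) (le_gaussVal_add ?_ ?_)
    · exact hle.1.trans (pow_two e ▸ gaussVal_add_le_gaussVal_mul)
    · exact hle.2.trans map_two_add_gaussVal_le_gaussVal_two_mul
  obtain hlt | hge := lt_or_ge (gaussVal v e) (v 2 + gaussVal v q)
  · have hle := hρ.gaussVal_le_add_self_of_lt hρρ' hlt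
    exact ⟨min_le_of_right_le hle, min_le_of_right_le (hle.trans (by gcongr))⟩
  · have hle : gaussVal v h + (v 2 + v 2) ≤ v 2 + gaussVal v q + (v 2 + gaussVal v q) :=
      calc gaussVal v h + (v 2 + v 2) ≤ gaussVal v q + gaussVal v q + (v 2 + v 2) := by
            gcongr; exact hρ.gaussVal_le_add_self hh
        _ = v 2 + gaussVal v q + (v 2 + gaussVal v q) := by abel
    exact ⟨min_le_of_left_le (hle.trans (add_le_add hge hge)),
      min_le_of_left_le (hle.trans (by gcongr))⟩

theorem IsTotallyOdd.isGreatest_min_gaussVal (hρ : IsTotallyOdd ρ) (hh : h = q ^ 2 + ρ) :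
    IsGreatest {u | ∃ q' ρ', IsPSD h q' ρ' ∧ u = min (gaussVal v h + (v 2 + v 2)) (gaussVal v ρ')}
      (min (gaussVal v h + (v 2 + v 2)) (gaussVal v ρ)) := by
  refine ⟨⟨q, ρ, ⟨hh, (hρ.two_mul_natDegree_le hh).trans (Nat.le_succ _)⟩, rfl⟩, ?_⟩
  rintro _ ⟨q', ρ', ⟨hh', -⟩, rfl⟩
  exact le_min (min_le_left _ _) (hρ.min_gaussVal_le hh hh')

end TotallyOdd

section Rescaling

variable {K : Type*} [Field K] {v : AddValuation K (WithTop ℚ)} {p : K[X]} {b b' : ℚ}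

/-- The Gauss valuation `minᵢ (v(pᵢ) + i b)` of `p` on the disc `v(z) ≥ b`, that is, the Gauss
valuation of `p(βz)` for every `β` with `v(β) = b`. -/
noncomputable def gaussValAt (v : AddValuation K (WithTop ℚ)) (b : ℚ) (p : K[X]) : WithTop ℚ :=
  p.support.inf fun i => v (p.coeff i) + (i * b : ℚ)

theorem gaussValAt_zero : gaussValAt v 0 p = gaussVal v p := by
  simp [gaussValAt, gaussVal]

theorem gaussVal_comp_C_mul_X {β : K} (hβ : β ≠ 0) (hb : v β = b) :
    gaussVal v (p.comp (C β * X)) = gaussValAt v b p := by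
  have hsupp : (p.comp (C β * X)).support = p.support := by
    ext i
    simp [comp_C_mul_X_coeff, hβ]
  rw [gaussVal, gaussValAt, hsupp]
  refine Finset.inf_congr rfl fun i _ => ?_
  rw [comp_C_mul_X_coeff, v.map_mul, v.map_pow, hb, ← WithTop.coe_nsmul, nsmul_eq_mul]

theorem gaussValAt_le_coeff (i : ℕ) : gaussValAt v b p ≤ v (p.coeff i) + (i * b : ℚ) := by
  by_cases hi : p.coeff i = 0
  · simp [hi]
  · exact Finset.inf_le (mem_support_iff.mpr hi)

theorem gaussValAt_add_mul_le {m : ℕ} (hm : ∀ i ∈ p.support, m ≤ i) (hbb' : b ≤ b') :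
    gaussValAt v b p + (m * (b' - b) : ℚ) ≤ gaussValAt v b' p := by
  refine Finset.le_inf fun i hi => ?_
  have hmi : (m * (b' - b) : ℚ) ≤ i * (b' - b) :=
    mul_le_mul_of_nonneg_right (mod_cast hm i hi) (sub_nonneg.mpr hbb')
  calc gaussValAt v b p + (m * (b' - b) : ℚ)
      ≤ v (p.coeff i) + (i * b : ℚ) + (i * (b' - b) : ℚ) :=
        add_le_add (gaussValAt_le_coeff i) (WithTop.coe_le_coe.mpr hmi)
    _ = v (p.coeff i) + (i * b' : ℚ) := by rw [add_assoc, ← WithTop.coe_add]; ring_nf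

theorem gaussValAt_le_add_mul {n : ℕ} (hn : p.natDegree ≤ n) (hbb' : b ≤ b') :
    gaussValAt v b' p ≤ gaussValAt v b p + (n * (b' - b) : ℚ) := by
  obtain rfl | hp := eq_or_ne p 0
  · simp [gaussValAt]
  obtain ⟨i, hi, hib⟩ := Finset.exists_mem_eq_inf p.support (support_nonempty.mpr hp)
    fun i => v (p.coeff i) + (i * b : ℚ)
  have hin : (i * (b' - b) : ℚ) ≤ n * (b' - b) :=
    mul_le_mul_of_nonneg_right (mod_cast (le_natDegree_of_mem_supp i hi).trans hn)
      (sub_nonneg.mpr hbb')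
  calc gaussValAt v b' p ≤ v (p.coeff i) + (i * b' : ℚ) := gaussValAt_le_coeff i
    _ = v (p.coeff i) + (i * b : ℚ) + (i * (b' - b) : ℚ) := by
      rw [add_assoc, ← WithTop.coe_add]; ring_nf
    _ ≤ gaussValAt v b p + (n * (b' - b) : ℚ) :=
      add_le_add hib.ge (WithTop.coe_le_coe.mpr hin)

theorem gaussVal_le_gaussValAt (hb : 0 ≤ b) : gaussVal v p ≤ gaussValAt v b p := by
  simpa [gaussValAt_zero] using
    gaussValAt_add_mul_le (v := v) (m := 0) (p := p) (fun i _ => i.zero_le) hb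

end Rescaling

section TruncatedDifference

/-- The truncated difference `min(w, g - c)`, equal to `w` for `g = ⊤`. It expresses `𝔱^S` through
`w = 2 v(2)`, `g = v(ρ)` and `c = v(h)`. -/
def truncDiff (c w : ℚ) (g : WithTop ℚ) : ℚ :=
  (g.map fun r => min w (r - c)).untopD w

variable {c w : ℚ} {g g' : WithTop ℚ}

@[simp]
theorem truncDiff_top : truncDiff c w ⊤ = w := rfl

@[simp]
theorem truncDiff_coe (r : ℚ) : truncDiff c w r = min w (r - c) := rfl

theorem truncDiff_le : truncDiff c w g ≤ w := by
  cases g <;> simp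

theorem truncDiff_nonneg (hw : 0 ≤ w) (hg : c ≤ g) : 0 ≤ truncDiff c w g := by
  cases g with
  | top => exact hw
  | coe r => exact le_min hw (sub_nonneg.mpr (WithTop.coe_le_coe.mp hg))

theorem coe_add_truncDiff : (c + truncDiff c w g : WithTop ℚ) = min (c + w : WithTop ℚ) g := by
  cases g with
  | top => simp
  | coe r =>
    rw [truncDiff_coe]
    norm_cast
    rw [← min_add_add_left, add_sub_cancel]

theorem min_truncDiff_add_le {k : ℚ} (hg : g + k ≤ g') :
    min (truncDiff c w g + k) w ≤ truncDiff c w g' := by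
  cases g' with
  | top => exact min_le_right _ _
  | coe r' =>
    cases g with
    | top => simp at hg
    | coe r =>
      replace hg : r + k ≤ r' := mod_cast hg
      rw [truncDiff_coe, truncDiff_coe]
      grind

theorem truncDiff_le_add {k : ℚ} (hk : 0 ≤ k) (hg : g' ≤ g + k) :
    truncDiff c w g' ≤ truncDiff c w g + k := by
  cases g with
  | top => exact truncDiff_le.trans (le_add_of_nonneg_right hk)
  | coe r =>
    cases g' with
    | top => simp [← WithTop.coe_add] at hg
    | coe r' =>
      replace hg : r' ≤ r + k := mod_cast hg
      rw [truncDiff_coe, truncDiff_coe]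
      grind

end TruncatedDifference

section RootsOfNonposValuation

variable {K : Type*} [Field K] {v : AddValuation K (WithTop ℚ)} {S : Multiset K}

theorem natDegree_rootsPoly : (rootsPoly S).natDegree = S.card :=
  natDegree_multiset_prod_X_sub_C_eq_card S

theorem rootsPoly_ne_zero : rootsPoly S ≠ 0 :=
  (monic_multisetProd_X_sub_C S).ne_zero

theorem gaussVal_rootsPoly (hS : ∀ x ∈ S, v x ≤ 0) :
    gaussVal v (rootsPoly S) = v ((rootsPoly S).coeff 0) := by
  refine (gaussVal_le_coeff 0).antisymm ?_
  induction S using Multiset.induction_on with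
  | empty => rw [rootsPoly, Multiset.map_zero, Multiset.prod_zero, ← C_1, gaussVal_C, coeff_C_zero]
  | cons a S ih =>
    obtain ⟨ha, hS⟩ := Multiset.forall_mem_cons.mp hS
    have hcons : rootsPoly (a ::ₘ S) = (X - C a) * rootsPoly S := by simp [rootsPoly]
    have hlin : v a ≤ gaussVal v (X - C a) := by
      refine le_gaussVal_iff.mpr fun i => ?_
      rw [coeff_sub, coeff_X, coeff_C]
      refine v.map_le_sub ?_ ?_ <;> split_ifs <;> simp [ha]
    calc v ((rootsPoly (a ::ₘ S)).coeff 0) = v a + v ((rootsPoly S).coeff 0) := by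
          simp [hcons, mul_coeff_zero]
      _ ≤ gaussVal v (X - C a) + gaussVal v (rootsPoly S) := add_le_add hlin (ih hS)
      _ ≤ gaussVal v (rootsPoly (a ::ₘ S)) := hcons ▸ gaussVal_add_le_gaussVal_mul

theorem gaussValAt_rootsPoly (hS : ∀ x ∈ S, v x ≤ 0) {b : ℚ} (hb : 0 ≤ b) :
    gaussValAt v b (rootsPoly S) = gaussVal v (rootsPoly S) := by
  refine le_antisymm ?_ (gaussVal_le_gaussValAt hb)
  simpa [gaussVal_rootsPoly hS] using gaussValAt_le_coeff (v := v) (b := b) (p := rootsPoly S) 0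

theorem isLUB_rootsPoly_comp (hS : ∀ x ∈ S, v x ≤ 0) {q ρ : K[X]} (hρ : IsTotallyOdd ρ)
    (hqρ : rootsPoly S = q ^ 2 + ρ) {b : ℚ} (hb : 0 ≤ b) {β : K} (hβ : β ≠ 0) (hβb : v β = b) :
    IsLUB {u | ∃ q' ρ', IsPSD ((rootsPoly S).comp (C β * X)) q' ρ' ∧
        u = min (gaussVal v (rootsPoly S) + (v 2 + v 2)) (gaussVal v ρ')}
      (min (gaussVal v (rootsPoly S) + (v 2 + v 2)) (gaussValAt v b ρ)) := by
  have hcomp : (rootsPoly S).comp (C β * X) = q.comp (C β * X) ^ 2 + ρ.comp (C β * X) := by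
    rw [hqρ, add_comp, pow_comp]
  have hgreatest := (hρ.comp_C_mul_X β).isGreatest_min_gaussVal (v := v) hcomp
  rw [gaussVal_comp_C_mul_X hβ hβb, gaussVal_comp_C_mul_X hβ hβb, gaussValAt_rootsPoly hS hb]
    at hgreatest
  exact hgreatest.isLUB

theorem tVal_zero_iff (hsurj : ∀ b : ℚ, ∃ β : K, β ≠ 0 ∧ v β = b) (hS : ∀ x ∈ S, v x ≤ 0)
    {q ρ : K[X]} (hρ : IsTotallyOdd ρ) (hqρ : rootsPoly S = q ^ 2 + ρ) {b t : ℚ} (hb : 0 ≤ b) :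
    TVal v S 0 b t ↔ gaussVal v (rootsPoly S) + t =
      min (gaussVal v (rootsPoly S) + (v 2 + v 2)) (gaussValAt v b ρ) := by
  have hlub {β : K} (hβ : β ≠ 0) (hβb : v β = b) := isLUB_rootsPoly_comp hS hρ hqρ hb hβ hβb
  have hval {β : K} (hβ : β ≠ 0) (hβb : v β = b) :
      gaussVal v ((rootsPoly S).comp (C β * X)) = gaussVal v (rootsPoly S) := by
    rw [gaussVal_comp_C_mul_X hβ hβb, gaussValAt_rootsPoly hS hb]
  rw [TVal, C_0]
  constructor
  · rintro ⟨β, hβ, hβb, ht⟩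
    rw [add_zero, hval hβ hβb] at ht
    exact ht.unique (hlub hβ hβb)
  · intro ht
    obtain ⟨β, hβ, hβb⟩ := hsurj b
    refine ⟨β, hβ, hβb, ?_⟩
    rw [add_zero, hval hβ hβb, ht]
    exact hlub hβ hβb

theorem tVal_zero_iff_eq_truncDiff (hsurj : ∀ b : ℚ, ∃ β : K, β ≠ 0 ∧ v β = b)
    (hS : ∀ x ∈ S, v x ≤ 0) {q ρ : K[X]} (hρ : IsTotallyOdd ρ) (hqρ : rootsPoly S = q ^ 2 + ρ)
    {c w : ℚ} (hc : gaussVal v (rootsPoly S) = c) (hw : v 2 + v 2 = w) {b t : ℚ} (hb : 0 ≤ b) :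
    TVal v S 0 b t ↔ t = truncDiff c w (gaussValAt v b ρ) := by
  rw [tVal_zero_iff hsurj hS hρ hqρ hb, hc, hw, ← coe_add_truncDiff]
  norm_cast
  exact add_right_inj c

theorem exists_tVal_zero_iff_eq [IsAlgClosed K] (hsurj : ∀ b : ℚ, ∃ β : K, β ≠ 0 ∧ v β = b)
    {w : ℚ} (hw : v 2 + v 2 = w) (hS : ∀ x ∈ S, v x ≤ 0) {n : ℕ}
    (hn : ∀ m, Odd m → m ≤ S.card → m ≤ n) :
    ∃ φ : ℚ → ℚ, (∀ b t, 0 ≤ b → (TVal v S 0 b t ↔ t = φ b)) ∧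
      (∀ b, 0 ≤ b → 0 ≤ φ b ∧ φ b ≤ w) ∧
      ∀ b b', 0 ≤ b → b ≤ b' →
        min (φ b + (b' - b)) w ≤ φ b' ∧ φ b' ≤ φ b + n * (b' - b) := by
  obtain ⟨q, ρ, hqρ, hρ⟩ := exists_eq_sq_add_isTotallyOdd (rootsPoly S)
  obtain ⟨c, hc⟩ := WithTop.ne_top_iff_exists.mp
    (gaussVal_ne_top (v := v) (rootsPoly_ne_zero (S := S)))
  have h2 : 0 ≤ v 2 := by simpa [one_add_one_eq_two] using v.map_add 1 1
  have hw0 : 0 ≤ w := WithTop.coe_le_coe.mp (hw ▸ add_nonneg h2 h2)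
  have hρn : ρ.natDegree ≤ n := by
    obtain rfl | hρ0 := eq_or_ne ρ 0
    · simp
    · exact hn _ (hρ.odd_natDegree hρ0) ((hρ.natDegree_le hqρ).trans_eq natDegree_rootsPoly)
  refine ⟨fun b => truncDiff c w (gaussValAt v b ρ), fun b t hb =>
    tVal_zero_iff_eq_truncDiff hsurj hS hρ hqρ hc.symm hw hb, fun b hb => ⟨?_, truncDiff_le⟩,
    fun b b' _ hbb' => ⟨min_truncDiff_add_le ?_, ?_⟩⟩
  · refine truncDiff_nonneg hw0 ?_
    exact hc.trans_le ((hρ.gaussVal_le hqρ).trans (gaussVal_le_gaussValAt hb))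
  · simpa using gaussValAt_add_mul_le (fun i => hρ.one_le_of_mem_support) hbb'
  · have hk : 0 ≤ (n * (b' - b) : ℚ) := mul_nonneg n.cast_nonneg (sub_nonneg.mpr hbb')
    exact truncDiff_le_add hk (gaussValAt_le_add_mul hρn hbb')

end RootsOfNonposValuation

/-- Let `h` be nonzero of degree `d ≥ 1` with all roots of valuation
`≤ 0`, `S` its multiset of roots, `φ(b) := 𝔱^S(0,b)` for `b ≥ 0` (expressed via the
relation `TVal`), and `d°` the largest odd integer `≤ d`.  Then:
(i) `0 ≤ φ ≤ 2 v 2` and `φ` is nondecreasing; (ii) for `0 ≤ b ≤ b'`,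
`min (φ b + (b' − b), 2 v 2) ≤ φ b' ≤ min (φ b + d° (b' − b), 2 v 2)`;
(iii) `φ(b) = 2 v 2` for all sufficiently large `b`; (iv) any `b ≥ 0` with
`φ(b) = 2 v 2` satisfies `b ≥ (2 v 2 − φ 0)/d°`, and the least such `b` is `≤ 2 v 2`. -/
theorem stmt12 {Kbar : Type*} [Field Kbar] [IsAlgClosed Kbar]
    (v : AddValuation Kbar (WithTop ℚ)) (hchar : (2 : Kbar) ≠ 0)
    (hres : ResidueAlgClosed v)
    (hsurj : ∀ b : ℚ, ∃ β : Kbar, β ≠ 0 ∧ v β = (b : WithTop ℚ))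
    (h : Kbar[X]) (hdeg : 1 ≤ h.natDegree)
    (hroots : ∀ x ∈ h.roots, v x ≤ 0)
    (dO : ℕ) (hdO₁ : Odd dO) (hdO₂ : dO ≤ h.natDegree)
    (hdO₃ : ∀ m : ℕ, Odd m → m ≤ h.natDegree → m ≤ dO) :
    -- (i)
    (∀ b t : ℚ, 0 ≤ b → TVal v h.roots (0 : Kbar) b t →
      0 ≤ t ∧ (t : WithTop ℚ) ≤ v 2 + v 2) ∧
    (∀ b b' t t' : ℚ, 0 ≤ b → b ≤ b' →
      TVal v h.roots (0 : Kbar) b t → TVal v h.roots (0 : Kbar) b' t' → t ≤ t') ∧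
    -- (ii)
    (∀ b b' t t' : ℚ, 0 ≤ b → b ≤ b' →
      TVal v h.roots (0 : Kbar) b t → TVal v h.roots (0 : Kbar) b' t' →
      min ((t + (b' - b) : ℚ) : WithTop ℚ) (v 2 + v 2) ≤ (t' : WithTop ℚ) ∧
      (t' : WithTop ℚ) ≤ min ((t + (dO : ℚ) * (b' - b) : ℚ) : WithTop ℚ) (v 2 + v 2)) ∧
    -- (iii)
    (∃ B : ℚ, ∀ b t : ℚ, B ≤ b → TVal v h.roots (0 : Kbar) b t →
      (t : WithTop ℚ) = v 2 + v 2) ∧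
    -- (iv)
    (∀ b t t₀ : ℚ, 0 ≤ b → TVal v h.roots (0 : Kbar) b t →
      TVal v h.roots (0 : Kbar) 0 t₀ → (t : WithTop ℚ) = v 2 + v 2 →
      v 2 + v 2 ≤ ((t₀ + (dO : ℚ) * b : ℚ) : WithTop ℚ)) ∧
    (∃ b t : ℚ, 0 ≤ b ∧ (b : WithTop ℚ) ≤ v 2 + v 2 ∧
      TVal v h.roots (0 : Kbar) b t ∧ (t : WithTop ℚ) = v 2 + v 2) := by
  obtain ⟨w, hw⟩ : ∃ w : ℚ, v 2 + v 2 = w := by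
    obtain ⟨r, hr⟩ := WithTop.ne_top_iff_exists.mp (v.ne_top_iff.mpr hchar)
    exact ⟨r + r, by rw [← hr, WithTop.coe_add]⟩
  obtain ⟨φ, htVal, hbounds, hslope⟩ := exists_tVal_zero_iff_eq hsurj hw hroots
    fun m hm hmS => hdO₃ m hm (hmS.trans h.card_roots')
  have hw0 : 0 ≤ w := (hbounds 0 le_rfl).1.trans (hbounds 0 le_rfl).2
  have hstable {b : ℚ} (hb : w ≤ b) : φ b = w := by
    grind [hslope 0 b le_rfl (hw0.trans hb)]
  rw [hw]
  refine ⟨fun b t hb ht => ?_, fun b b' t t' hb hbb' ht ht' => ?_,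
    fun b b' t t' hb hbb' ht ht' => ?_, ⟨w, fun b t hb ht => ?_⟩,
    fun b t t₀ hb ht ht₀ htw => ?_,
    ⟨w, w, hw0, le_rfl, (htVal w w hw0).mpr (hstable le_rfl).symm, rfl⟩⟩
  · obtain rfl := (htVal b t hb).mp ht
    exact_mod_cast hbounds b hb
  · obtain ⟨rfl, rfl⟩ := (htVal b t hb).mp ht, (htVal b' t' (hb.trans hbb')).mp ht'
    grind
  · obtain ⟨rfl, rfl⟩ := (htVal b t hb).mp ht, (htVal b' t' (hb.trans hbb')).mp ht'
    obtain ⟨hlower, hupper⟩ := hslope b b' hb hbb'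
    exact ⟨mod_cast hlower, mod_cast le_min hupper (hbounds b' (hb.trans hbb')).2⟩
  · rw [(htVal b t (hw0.trans hb)).mp ht, hstable hb]
  · obtain ⟨rfl, rfl⟩ := (htVal b t hb).mp ht, (htVal 0 t₀ le_rfl).mp ht₀
    rw [← htw]
    simpa using WithTop.coe_le_coe.mpr (hslope 0 b le_rfl hb).2
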